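/- Let K be a Kalton–Roberts constant, let {N_γ}_{γ∈Γ} be an almost disjoint family of infinite subsets of ℕ with |Γ| equal to the cardinality of the continuum, and let JL∞ be the associated Johnson–Lindenstrauss space. Then: (a) JL∞ has the ω₁-SVM property with constant v for every v > 120K, i.e. for every v > 120K, every countable set algebra F and every 1-additive ν : F → JL∞ there is a vector measure μ : F → JL∞ with ‖ν(A) − μ(A)‖ ≤ v for all A ∈ F; and (b) JL∞ does not have the ω₂-SVM property, i.e. there is no finite constant working for all set algebras of cardinality at most ω₁. In particular the SVM character of JL∞ equals ω₂. -/

import Mathlib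

/-!
**Countable algebras.** The range of `ν` lies over countably many members of the family, which
become disjoint after deleting a finite part from each. An element of `JL∞` over a disjoint family
is the sum of its limits along the members, spread out over these sets, and of a null sequence, so
this part of `JL∞` is `c₀ ⊕ c₀`. Taking limits has norm one and the remainder at most doubles the
norm. For null sequences of real 1-additive maps, the Kalton–Roberts theorem gives a measure for
each index; all pointwise cluster points of these measures lie in the compact set of measures
bounded by `K`, so subtracting from each measure a nearest point of this set, as in Veech's proof
of Sobczyk's theorem, makes the measures tend to zero and costs another `K`. The total error is
`2K + 2 * 2K = 6K`.

**Algebras of cardinality `ℵ₁`.** Choose an infinite, co-infinite subset `M α` of each of `ℵ₁` many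
of the sets `N α`. Elements of `JL∞` have limits along `N α`, so `1_{M α} ∉ JL∞`. On finite sets of
indices, `∑_{α ∈ A} 1_{M α} - 1_{⋃_{α ∈ A} M α}` is a 1-additive map into the finitely supported
sequences, and it extends to the finite-cofinite algebra by `ν A = -ν Aᶜ`. If a measure `μ`
approximates it, then `∑_{α ∈ A} 1_{M α} - μ A` is uniformly bounded, so each of its coordinates
vanishes at all but countably many points `{α}`, forcing `1_{M α} = μ {α} ∈ JL∞` for some `α`.
-/

open Cardinal ENNReal

/-- A set algebra: contains `∅`, closed under complements and finite unions. -/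
def IsSetAlg {Ω : Type*} (F : Set (Set Ω)) : Prop :=
  ∅ ∈ F ∧ (∀ A ∈ F, Aᶜ ∈ F) ∧ ∀ A ∈ F, ∀ B ∈ F, A ∪ B ∈ F

/-- `ν` is 1-additive on the set algebra `F`. -/
def OneAdd {Ω X : Type*} [SeminormedAddCommGroup X] (F : Set (Set Ω)) (ν : Set Ω → X) : Prop :=
  ∀ A ∈ F, ∀ B ∈ F, Disjoint A B → ‖ν (A ∪ B) - ν A - ν B‖ ≤ 1

/-- `μ` is a (finitely additive) vector measure on the set algebra `F`. -/
def VectMeas {Ω X : Type*} [AddCommGroup X] (F : Set (Set Ω)) (μ : Set Ω → X) : Prop :=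
  ∀ A ∈ F, ∀ B ∈ F, Disjoint A B → μ (A ∪ B) = μ A + μ B

/-- `K` is a Kalton–Roberts constant. -/
def IsKRConst (K : ℝ) : Prop :=
  ∀ (Ω : Type) (F : Set (Set Ω)), IsSetAlg F →
    ∀ ν : Set Ω → ℝ, OneAdd F ν →
      ∃ μ : Set Ω → ℝ, VectMeas F μ ∧ ∀ A ∈ F, |ν A - μ A| ≤ K

/-- `X` has the SVM property with constant `v` (arbitrary set algebras). -/
def HasSVMBound (X : Type*) [SeminormedAddCommGroup X] (v : ℝ) : Prop :=
  ∀ (Ω : Type) (F : Set (Set Ω)), IsSetAlg F →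
    ∀ ν : Set Ω → X, OneAdd F ν →
      ∃ μ : Set Ω → X, VectMeas F μ ∧ ∀ A ∈ F, ‖ν A - μ A‖ ≤ v

/-- `X` has the ω-SVM property with constant `v` (finite set algebras). -/
def HasOmegaSVMBound (X : Type*) [SeminormedAddCommGroup X] (v : ℝ) : Prop :=
  ∀ (Ω : Type) (F : Set (Set Ω)), IsSetAlg F → F.Finite →
    ∀ ν : Set Ω → X, OneAdd F ν →
      ∃ μ : Set Ω → X, VectMeas F μ ∧ ∀ A ∈ F, ‖ν A - μ A‖ ≤ v

/-- `X` has the κ-SVM property with constant `v` (set algebras of cardinality `< κ`). -/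
def HasKappaSVMBound (X : Type*) [SeminormedAddCommGroup X] (κ : Cardinal) (v : ℝ) : Prop :=
  ∀ (Ω : Type) (F : Set (Set Ω)), IsSetAlg F → #(↥F) < κ →
    ∀ ν : Set Ω → X, OneAdd F ν →
      ∃ μ : Set Ω → X, VectMeas F μ ∧ ∀ A ∈ F, ‖ν A - μ A‖ ≤ v


/-- The Johnson–Lindenstrauss space associated with an almost disjoint family
N : the closed linear span inside ℓ∞ of c₀ together with the indicators of the
sets N γ. -/
noncomputable def JLinf (Γ : Type) (N : Γ → Set ℕ) :
    Submodule ℝ ↥(lp (fun _ : ℕ => ℝ) ⊤) :=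
  (Submodule.span ℝ
    ({x : ↥(lp (fun _ : ℕ => ℝ) ⊤) | ∀ ε : ℝ, 0 < ε → {n : ℕ | ε ≤ |x n|}.Finite} ∪
     {x | ∃ γ : Γ, ∀ n : ℕ, x n = Set.indicator (N γ) (fun _ => (1 : ℝ)) n})).topologicalClosure

open Filter Topology
open scoped lp

/-! ### Null families of real-valued maps -/

section NullFamily

lemma IsKRConst.nonneg {K : ℝ} (hK : IsKRConst K) : 0 ≤ K := by
  obtain ⟨μ, -, hμ⟩ := hK Unit Set.univ ⟨trivial, fun _ _ => trivial, fun _ _ _ _ => trivial⟩ 0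
    fun _ _ _ _ _ => by simp
  exact (abs_nonneg _).trans (hμ ∅ trivial)

lemma exists_forall_mem_tendsto_sub_of_isCompact {E ι : Type*} [AddCommGroup E]
    [TopologicalSpace E] [IsTopologicalAddGroup E] [TopologicalSpace.PseudoMetrizableSpace E]
    {M : Set E} (hM : IsCompact M) (hne : M.Nonempty) {L : Filter ι} {m : ι → E}
    (hlim : ∀ U : Ultrafilter ι, ↑U ≤ L → ∃ p ∈ M, Tendsto m U (𝓝 p)) :
    ∃ l : ι → E, (∀ k, l k ∈ M) ∧ Tendsto (fun k => m k - l k) L (𝓝 0) := by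
  let _ : PseudoMetricSpace E := TopologicalSpace.pseudoMetrizableSpacePseudoMetric E
  choose l hlM hl using fun k => hM.exists_infDist_eq_dist hne (m k)
  refine ⟨l, hlM, (tendsto_iff_ultrafilter _ _ _).2 fun U hU => ?_⟩
  obtain ⟨p, hpM, hp⟩ := hlim U hU
  have hdist : Tendsto (fun k => dist (m k) (l k)) U (𝓝 0) := by
    have hinf := ((Metric.continuous_infDist_pt M).tendsto p).comp hp
    rw [Metric.infDist_zero_of_mem hpM] at hinf
    exact hinf.congr hl
  simpa using hp.sub (hp.congr_dist hdist)

variable {Ω : Type*} {F : Set (Set Ω)} {K : ℝ}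

/-- The finitely additive measures on `F` bounded by `K`. The bound is also imposed on the
irrelevant values off `F`, so that the set is compact for pointwise convergence. -/
def boundedMeasures (F : Set (Set Ω)) (K : ℝ) : Set (Set Ω → ℝ) :=
  {μ | VectMeas F μ ∧ ∀ A, |μ A| ≤ K}

lemma isCompact_boundedMeasures : IsCompact (boundedMeasures F K) := by
  have hclosed : IsClosed (boundedMeasures F K) := by
    simp only [boundedMeasures, VectMeas, Set.ofPred_and, Set.ofPred_forall]
    exact .inter
      (isClosed_iInter fun A => isClosed_iInter fun _ => isClosed_iInter fun B =>
        isClosed_iInter fun _ => isClosed_iInter fun _ => isClosed_eq (by fun_prop) (by fun_prop))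
      (isClosed_iInter fun A => isClosed_le (by fun_prop) (by fun_prop))
  exact (isCompact_univ_pi fun _ => isCompact_Icc).of_isClosed_subset hclosed
    fun μ hμ A _ => abs_le.1 (hμ.2 A)

lemma zero_mem_boundedMeasures (hK : 0 ≤ K) : 0 ∈ boundedMeasures F K :=
  ⟨fun _ _ _ _ _ => by simp, fun _ => by simpa using hK⟩

lemma exists_mem_boundedMeasures_tendsto_ultrafilter {ι : Type*} (hF : IsSetAlg F)
    (U : Ultrafilter ι) {ν m : ι → Set Ω → ℝ} (hm : ∀ k, VectMeas F (m k))
    (hνm : ∀ k, ∀ A ∈ F, |ν k A - m k A| ≤ K)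
    (hν : ∀ A ∈ F, Tendsto (fun k => ν k A) U (𝓝 0)) :
    ∃ p ∈ boundedMeasures F K, ∀ A ∈ F, Tendsto (fun k => m k A) U (𝓝 (p A)) := by
  let d : ι → Set Ω → ℝ := fun k => F.indicator (m k - ν k)
  have hd (k A) : |d k A| ≤ K := by
    by_cases hA : A ∈ F
    · simpa [d, hA, abs_sub_comm] using hνm k A hA
    · simpa [d, hA] using (abs_nonneg _).trans (hνm k ∅ hF.1)
  obtain ⟨p, hpK, hp⟩ := (isCompact_univ_pi fun _ => isCompact_Icc).ultrafilter_le_nhds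
    (U.map d) (le_principal_iff.2 (Ultrafilter.mem_map.2 (Eventually.of_forall
      fun k A _ => abs_le.1 (hd k A))))
  have hmp (A) (hA : A ∈ F) : Tendsto (fun k => m k A) U (𝓝 (p A)) := by
    simpa [d, hA] using (tendsto_pi_nhds.1 hp A).add (hν A hA)
  refine ⟨p, ⟨fun A hA B hB hAB => ?_, fun A => abs_le.2 (hpK A trivial)⟩, hmp⟩
  exact tendsto_nhds_unique (hmp _ (hF.2.2 A hA B hB))
    (((hmp A hA).add (hmp B hB)).congr fun k => (hm k A hA B hB hAB).symm)

lemma exists_vectMeas_tendsto_zero {Ω : Type} {F : Set (Set Ω)} {ι : Type*} {L : Filter ι}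
    (hK : IsKRConst K) (hF : IsSetAlg F) (hFc : F.Countable) {ν : ι → Set Ω → ℝ}
    (hν : ∀ k, OneAdd F (ν k))
    (hν0 : ∀ A ∈ F, Tendsto (fun k => ν k A) L (𝓝 0)) :
    ∃ μ : ι → Set Ω → ℝ, (∀ k, VectMeas F (μ k)) ∧
      (∀ A ∈ F, Tendsto (fun k => μ k A) L (𝓝 0)) ∧
      ∀ k, ∀ A ∈ F, |ν k A - μ k A| ≤ 2 * K := by
  have : Countable F := hFc
  choose m hm hνm using fun k => hK Ω F hF (ν k) (hν k)
  have hlim (U : Ultrafilter ι) (hU : ↑U ≤ L) :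
      ∃ p ∈ F.domRestrict '' boundedMeasures F K,
        Tendsto (fun k => F.domRestrict (m k)) U (𝓝 p) := by
    obtain ⟨p, hp, hmp⟩ := exists_mem_boundedMeasures_tendsto_ultrafilter hF U hm hνm
      fun A hA => (hν0 A hA).mono_left hU
    exact ⟨_, ⟨p, hp, rfl⟩, tendsto_pi_nhds.2 fun A => hmp A A.2⟩
  obtain ⟨l, hl, hml⟩ := exists_forall_mem_tendsto_sub_of_isCompact
    (isCompact_boundedMeasures.image (Pi.continuous_domRestrict F))
    ⟨_, 0, zero_mem_boundedMeasures hK.nonneg, rfl⟩ hlim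
  choose n hn hnl using hl
  refine ⟨fun k => m k - n k, fun k A hA B hB hAB => ?_, fun A hA => ?_, fun k A hA => ?_⟩
  · simp only [Pi.sub_apply, hm k A hA B hB hAB, (hn k).1 A hA B hB hAB]
    ring
  · simpa [← hnl, Set.domRestrict_apply] using tendsto_pi_nhds.1 hml ⟨A, hA⟩
  · calc |ν k A - (m k A - n k A)| = |(ν k A - m k A) + n k A| := by ring_nf
      _ ≤ |ν k A - m k A| + |n k A| := abs_add_le _ _
      _ ≤ 2 * K := by linarith [hνm k A hA, (hn k).2 A]

end NullFamily


/-! ### Membership in the Johnson–Lindenstrauss space -/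

section Membership

variable {Γ : Type} {N : Γ → Set ℕ} {x : ℓ^∞(ℕ, ℝ)}

lemma abs_apply_le_norm (x : ℓ^∞(ℕ, ℝ)) (n : ℕ) : |x n| ≤ ‖x‖ :=
  lp.norm_apply_le_norm ENNReal.top_ne_zero x n

/-- The space `c₀` as a subspace of `ℓ∞`. -/
def nullSeq : Submodule ℝ ℓ^∞(ℕ, ℝ) where
  carrier := {x | Tendsto x cofinite (𝓝 0)}
  zero_mem' := tendsto_const_nhds
  add_mem' {x y} hx hy := by
    change Tendsto (fun n => x n + y n) cofinite (𝓝 0)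
    simpa using Tendsto.add hx hy
  smul_mem' c x hx := by
    change Tendsto (fun n => c * x n) cofinite (𝓝 0)
    simpa using Tendsto.const_mul c hx

/-- The indicator `1_S` as an element of `ℓ∞`. -/
noncomputable def indicatorLp (S : Set ℕ) : ℓ^∞(ℕ, ℝ) :=
  ⟨S.indicator 1, memℓp_infty ⟨1, by
    rintro _ ⟨n, rfl⟩
    exact (norm_indicator_le_norm_self 1 n).trans (by simp)⟩⟩

@[simp]
lemma coeFn_indicatorLp (S : Set ℕ) : ⇑(indicatorLp S) = S.indicator 1 := rfl

/-- The finite linear combination `∑ γ, f γ • 1_{N γ}` as a sequence. -/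
noncomputable def indicatorComb {ι : Type*} (N : ι → Set ℕ) : (ι →₀ ℝ) →ₗ[ℝ] ℕ → ℝ :=
  Finsupp.linearCombination ℝ fun γ => (N γ).indicator 1

lemma indicatorComb_apply {ι : Type*} (N : ι → Set ℕ) (f : ι →₀ ℝ) (n : ℕ) :
    indicatorComb N f n = ∑ γ ∈ f.support, f γ * (N γ).indicator 1 n := by
  rw [indicatorComb, Finsupp.linearCombination_apply, Finsupp.sum, Finset.sum_apply]
  rfl

lemma coeFn_linearCombination_indicatorLp {ι : Type*} (N : ι → Set ℕ) (f : ι →₀ ℝ) :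
    ⇑(Finsupp.linearCombination ℝ (fun γ => indicatorLp (N γ)) f) = indicatorComb N f := by
  ext n
  rw [indicatorComb_apply, Finsupp.linearCombination_apply, Finsupp.sum, lp.coeFn_sum,
    Finset.sum_apply]
  rfl

lemma JLinf_eq_topologicalClosure (N : Γ → Set ℕ) :
    JLinf Γ N =
      (nullSeq ⊔ LinearMap.range
        (Finsupp.linearCombination ℝ fun γ => indicatorLp (N γ))).topologicalClosure := by
  have hnull : {x : ℓ^∞(ℕ, ℝ) | ∀ ε : ℝ, 0 < ε → {n : ℕ | ε ≤ |x n|}.Finite} = nullSeq := by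
    ext x
    simp [nullSeq, Metric.tendsto_nhds, eventually_cofinite]
  have hind : {x : ℓ^∞(ℕ, ℝ) | ∃ γ : Γ, ∀ n, x n = (N γ).indicator (fun _ => (1 : ℝ)) n} =
      Set.range fun γ => indicatorLp (N γ) := by
    ext x
    exact exists_congr fun γ => ⟨fun h => (lp.ext (funext h)).symm, by rintro rfl n; rfl⟩
  rw [JLinf, hnull, hind, Submodule.span_union, Submodule.span_eq,
    Finsupp.range_linearCombination]

lemma nullSeq_le_JLinf (N : Γ → Set ℕ) : nullSeq ≤ JLinf Γ N := by
  rw [JLinf_eq_topologicalClosure]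
  exact le_sup_left.trans (Submodule.le_topologicalClosure _)

lemma exists_mem_nullSeq_norm_sub_le {ε : ℝ} (hx : ∀ᶠ n in cofinite, |x n| ≤ ε) :
    ∃ z ∈ nullSeq, ‖x - z‖ ≤ ε := by
  let T : Set ℕ := {n | ¬ |x n| ≤ ε}
  have hsupp : {n | T.indicator x n ≠ 0}.Finite := hx.subset Set.support_indicator_subset
  have hmem : Memℓp (T.indicator x) ∞ := (memℓp_zero hsupp).of_exponent_ge zero_le
  refine ⟨⟨T.indicator x, hmem⟩, ?_, ?_⟩
  · refine tendsto_const_nhds.congr' ?_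
    filter_upwards [hsupp.compl_mem_cofinite] with n hn
    exact (not_not.1 hn).symm
  · obtain ⟨n₀, hn₀⟩ := hx.exists
    refine lp.norm_le_of_forall_le' _ fun n => ?_
    change |x n - T.indicator x n| ≤ ε
    by_cases hn : n ∈ T
    · simpa [hn] using (abs_nonneg _).trans hn₀
    · simpa [hn] using not_not.1 hn

lemma mem_JLinf_iff :
    x ∈ JLinf Γ N ↔
      ∀ ε > 0, ∃ f : Γ →₀ ℝ, ∀ᶠ n in cofinite, |x n - indicatorComb N f n| < ε := by
  rw [JLinf_eq_topologicalClosure, ← SetLike.mem_coe, Submodule.topologicalClosure_coe,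
    Metric.mem_closure_iff]
  constructor
  · intro hx ε hε
    obtain ⟨y, hy, hxy⟩ := hx (ε / 2) (half_pos hε)
    obtain ⟨z, hz, _, ⟨f, rfl⟩, rfl⟩ := Submodule.mem_sup.1 hy
    set w := Finsupp.linearCombination ℝ (fun γ => indicatorLp (N γ)) f with hw
    refine ⟨f, ?_⟩
    filter_upwards [Metric.tendsto_nhds.1 hz (ε / 2) (half_pos hε)] with n hn
    rw [dist_zero_right, Real.norm_eq_abs] at hn
    rw [← coeFn_linearCombination_indicatorLp, ← hw]
    calc |x n - w n| = |(x - (z + w)) n + z n| := by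
          congr 1
          change _ = x n - (z n + w n) + z n
          ring
      _ ≤ |(x - (z + w)) n| + |z n| := abs_add_le _ _
      _ ≤ dist x (z + w) + |z n| := by
          rw [dist_eq_norm]
          gcongr
          exact abs_apply_le_norm _ n
      _ < ε := by linarith
  · intro h ε hε
    obtain ⟨f, hf⟩ := h (ε / 2) (half_pos hε)
    rw [← coeFn_linearCombination_indicatorLp] at hf
    set w := Finsupp.linearCombination ℝ (fun γ => indicatorLp (N γ)) f
    obtain ⟨z, hz, hxz⟩ := exists_mem_nullSeq_norm_sub_le (x := x - w) (hf.mono fun n => le_of_lt)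
    refine ⟨z + w, Submodule.add_mem_sup hz ⟨f, rfl⟩, ?_⟩
    rw [dist_eq_norm, add_comm, ← sub_sub]
    exact hxz.trans_lt (half_lt_self hε)

end Membership

/-! ### Limits along the members of the family -/

section Limits

variable {Γ : Type} {N : Γ → Set ℕ} {x : ℓ^∞(ℕ, ℝ)}

/-- Distinct members of the family have finite intersection. -/
def AlmostDisjoint {ι : Type*} (N : ι → Set ℕ) : Prop :=
  Pairwise fun γ δ => (N γ ∩ N δ).Finite

lemma eventually_indicatorComb_eq {ι : Type*} {N : ι → Set ℕ} (hN : AlmostDisjoint N)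
    (f : ι →₀ ℝ) (γ : ι) :
    ∀ᶠ n in cofinite ⊓ 𝓟 (N γ), indicatorComb N f n = f γ := by
  have hother : ∀ᶠ n in cofinite, ∀ δ ∈ f.support, γ ≠ δ → n ∉ N γ ∩ N δ :=
    (eventually_all_finset _).2 fun δ _ =>
      eventually_imp_distrib_left.2 fun hγδ => (hN hγδ).eventually_cofinite_notMem
  rw [eventually_inf_principal]
  filter_upwards [hother] with n hn hnγ
  rw [indicatorComb_apply, Finset.sum_eq_single γ]
  · simp [hnγ]
  · intro δ hδ hδγ
    have hnδ : n ∉ N δ := fun h => hn δ hδ hδγ.symm ⟨hnγ, h⟩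
    simp [hnδ]
  · intro hγ
    simp [Finsupp.notMem_support_iff.1 hγ]

lemma exists_tendsto_of_mem_JLinf (hN : AlmostDisjoint N) (hx : x ∈ JLinf Γ N) (γ : Γ) :
    ∃ p : ℝ, Tendsto x (cofinite ⊓ 𝓟 (N γ)) (𝓝 p) := by
  rcases eq_or_neBot (cofinite ⊓ 𝓟 (N γ)) with hbot | hne
  · exact ⟨0, by simp [hbot]⟩
  refine cauchy_map_iff_exists_tendsto.1 (Metric.cauchy_iff.2 ⟨hne.map _, fun ε hε => ?_⟩)
  obtain ⟨f, hf⟩ := mem_JLinf_iff.1 hx (ε / 2) (half_pos hε)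
  refine ⟨Metric.ball (f γ) (ε / 2), ?_, fun a ha b hb => ?_⟩
  · rw [mem_map]
    filter_upwards [eventually_indicatorComb_eq hN f γ, hf.filter_mono inf_le_left] with n hn hxn
    rwa [hn] at hxn
  · linarith [dist_triangle_right a b (f γ), Metric.mem_ball.1 ha, Metric.mem_ball.1 hb]

lemma indicatorLp_notMem_JLinf (hN : AlmostDisjoint N) {γ : Γ} {M : Set ℕ} (hMN : M ⊆ N γ)
    (hM : M.Infinite) (hNM : (N γ \ M).Infinite) : indicatorLp M ∉ JLinf Γ N := by
  intro hmem
  obtain ⟨p, hp⟩ := exists_tendsto_of_mem_JLinf hN hmem γ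
  have := hM.cofinite_inf_principal_neBot
  have := hNM.cofinite_inf_principal_neBot
  have h_one : Tendsto (indicatorLp M) (cofinite ⊓ 𝓟 M) (𝓝 1) :=
    tendsto_const_nhds.congr' (eventually_inf_principal.2 (.of_forall fun n hn => by simp [hn]))
  have h_zero : Tendsto (indicatorLp M) (cofinite ⊓ 𝓟 (N γ \ M)) (𝓝 0) :=
    tendsto_const_nhds.congr' (eventually_inf_principal.2 (.of_forall fun n hn => by simp [hn.2]))
  have hp_one : p = 1 := tendsto_nhds_unique (hp.mono_left (by gcongr)) h_one
  have hp_zero : p = 0 :=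
    tendsto_nhds_unique (hp.mono_left (by gcongr; exact Set.sdiff_subset)) h_zero
  exact one_ne_zero (hp_one.symm.trans hp_zero)

end Limits

/-! ### Passage to countable and disjoint families -/

section Reduction

variable {Γ : Type} {N : Γ → Set ℕ} {x : ℓ^∞(ℕ, ℝ)}

lemma JLinf_comp_le {ι : Type} (N : Γ → Set ℕ) (g : ι → Γ) : JLinf ι (N ∘ g) ≤ JLinf Γ N := by
  refine Submodule.topologicalClosure_mono
    (Submodule.span_mono (Set.union_subset_union_right _ ?_))
  rintro x ⟨i, hi⟩
  exact ⟨g i, hi⟩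

lemma exists_countable_mem_JLinf (hx : x ∈ JLinf Γ N) :
    ∃ S : Set Γ, S.Countable ∧ x ∈ JLinf S fun γ => N γ := by
  choose f hf using fun m : ℕ => mem_JLinf_iff.1 hx (1 / ((m : ℝ) + 1)) Nat.one_div_pos_of_nat
  let S : Set Γ := ⋃ m, (f m).support
  refine ⟨S, Set.countable_iUnion fun m => (f m).support.countable_toSet,
    mem_JLinf_iff.2 fun ε hε => ?_⟩
  obtain ⟨m, hm⟩ := exists_nat_one_div_lt hε
  have hcomb : indicatorComb (fun γ : S => N γ) ((f m).comapDomain (↑) Subtype.val_injective.injOn)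
      = indicatorComb N (f m) := by
    have hrange : ((f m).support : Set Γ) ⊆ Set.range ((↑) : S → Γ) := by
      rw [Subtype.range_coe]
      exact Set.subset_iUnion (fun m => ((f m).support : Set Γ)) m
    conv_rhs => rw [← Finsupp.mapDomain_comapDomain _ Subtype.val_injective _ hrange]
    rw [indicatorComb, indicatorComb, Finsupp.linearCombination_mapDomain]
    rfl
  exact ⟨_, hcomb ▸ (hf m).mono fun n hn => hn.trans hm⟩

lemma exists_countable_forall_mem_JLinf {X : Set ℓ^∞(ℕ, ℝ)} (hX : X.Countable)
    (hXN : ∀ x ∈ X, x ∈ JLinf Γ N) :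
    ∃ S : Set Γ, S.Countable ∧ ∀ x ∈ X, x ∈ JLinf S fun γ => N γ := by
  choose! S hS hxS using fun x hx => exists_countable_mem_JLinf (hXN x hx)
  exact ⟨⋃ x ∈ X, S x, hX.biUnion hS, fun x hx =>
    JLinf_comp_le _ (Set.inclusion (Set.subset_biUnion_of_mem hx)) (hxS x hx)⟩

lemma JLinf_congr {N' : Γ → Set ℕ} (h : ∀ γ, N γ =ᶠ[cofinite] N' γ) : JLinf Γ N = JLinf Γ N' := by
  have hcomb (f : Γ →₀ ℝ) : indicatorComb N f =ᶠ[cofinite] indicatorComb N' f := by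
    filter_upwards [(eventually_all_finset f.support).2 fun γ _ =>
      indicator_eventuallyEq (EventuallyEq.refl _ (1 : ℕ → ℝ)) (h γ)] with n hn
    rw [indicatorComb_apply, indicatorComb_apply]
    exact Finset.sum_congr rfl fun γ hγ => by rw [hn γ hγ]
  ext x
  simp only [mem_JLinf_iff]
  refine forall₂_congr fun ε _ => exists_congr fun f => eventually_congr ?_
  filter_upwards [hcomb f] with n hn
  rw [hn]

/-- The class of color `i` of a partial coloring `q` of `ℕ`. Partial colorings encode the
disjoint families of subsets of `ℕ`. -/
def colorClass {ι : Type*} (q : ℕ → Option ι) (i : ι) : Set ℕ :=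
  q ⁻¹' {some i}

lemma almostDisjoint_colorClass {ι : Type*} (q : ℕ → Option ι) : AlmostDisjoint (colorClass q) := by
  intro i j hij
  refine Set.finite_empty.subset fun n hn => hij ?_
  exact Option.some_injective _ (hn.1.symm.trans hn.2)

lemma exists_colorClass_eventuallyEq {ι : Type*} [Countable ι] {N : ι → Set ℕ}
    (hN : AlmostDisjoint N) :
    ∃ q : ℕ → Option ι, ∀ γ, colorClass q γ =ᶠ[cofinite] N γ := by
  obtain ⟨e, he⟩ := exists_injective_nat ι
  have hfirst (n : ℕ) : ∃ o : Option ι, ∀ γ, o = some γ ↔ n ∈ N γ ∧ ∀ δ, n ∈ N δ → e γ ≤ e δ := by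
    by_cases hn : ∃ γ, n ∈ N γ
    · obtain ⟨γ, hγ⟩ := exists_minimalFor_of_wellFoundedLT (fun γ => n ∈ N γ) e hn
      have hmin (δ) (hδ : n ∈ N δ) : e γ ≤ e δ := (le_total (e γ) (e δ)).elim id (hγ.2 hδ)
      refine ⟨some γ, fun δ => ⟨?_, fun hδ => ?_⟩⟩
      · rintro ⟨⟩
        exact ⟨hγ.1, hmin⟩
      · rw [he ((hmin δ hδ.1).antisymm (hδ.2 γ hγ.1))]
    · refine ⟨none, fun γ => ?_⟩
      have hnγ : n ∉ N γ := fun h => hn ⟨γ, h⟩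
      simp [hnγ]
  choose q hq using hfirst
  refine ⟨q, fun γ => ?_⟩
  have hearlier : ∀ᶠ n in cofinite, ∀ δ ∈ {δ | e δ < e γ}, n ∉ N γ ∩ N δ :=
    (eventually_all_finite ((Set.finite_lt_nat (e γ)).preimage he.injOn)).2 fun δ hδ =>
      (hN (ne_of_apply_ne e hδ.ne')).eventually_cofinite_notMem
  filter_upwards [hearlier] with n hn
  refine propext ((hq n γ).trans (and_iff_left_of_imp fun hnγ δ hnδ => ?_))
  exact not_lt.1 fun hlt => hn δ hlt ⟨hnγ, hnδ⟩

end Reduction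

/-! ### Countable algebras -/

section Spread

variable {ι : Type*} {q : ℕ → Option ι} {l : ι → ℝ}

/-- The sequence with the value `l i` on the class of color `i` and `0` at the uncolored points.
It embeds `c₀(ι)` into the Johnson–Lindenstrauss space of the color classes. -/
def spread (q : ℕ → Option ι) : (ι → ℝ) →ₗ[ℝ] ℕ → ℝ where
  toFun l n := (q n).elim 0 l
  map_add' l l' := by
    ext n
    cases hn : q n <;> simp [hn]
  map_smul' c l := by
    ext n
    cases hn : q n <;> simp [hn]

lemma spread_apply (q : ℕ → Option ι) (l : ι → ℝ) (n : ℕ) : spread q l n = (q n).elim 0 l := rfl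

lemma abs_spread_le {C : ℝ} (hC : 0 ≤ C) (hl : ∀ i, |l i| ≤ C) (n : ℕ) : |spread q l n| ≤ C := by
  cases hn : q n <;> simp [spread_apply, hn, hC, hl]

lemma indicatorComb_colorClass (q : ℕ → Option ι) (f : ι →₀ ℝ) :
    indicatorComb (colorClass q) f = spread q f := by
  classical
  ext n
  rw [indicatorComb_apply]
  cases hn : q n <;> simp [spread_apply, colorClass, hn, Set.indicator_apply, eq_comm]

end Spread

section Decomposition

variable {ι : Type} {q : ℕ → Option ι} {x : ℓ^∞(ℕ, ℝ)} {l : ι → ℝ}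

lemma mem_JLinf_colorClass_of_tendsto (hl : Tendsto l cofinite (𝓝 0))
    (hx : Tendsto (fun n => x n - spread q l n) cofinite (𝓝 0)) :
    x ∈ JLinf ι (colorClass q) := by
  refine mem_JLinf_iff.2 fun ε hε => ?_
  have hlarge : {i | ε / 2 ≤ |l i|}.Finite := by
    simpa [eventually_cofinite] using Metric.tendsto_nhds.1 hl (ε / 2) (half_pos hε)
  let f : ι →₀ ℝ := .ofSupportFinite ({i | ε / 2 ≤ |l i|}.indicator l)
    (hlarge.subset Set.support_indicator_subset)
  have hlf (i) : |(l - f) i| ≤ ε / 2 := by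
    change |l i - {i | ε / 2 ≤ |l i|}.indicator l i| ≤ ε / 2
    by_cases hi : ε / 2 ≤ |l i|
    · simpa [hi] using (half_pos hε).le
    · simpa [hi] using (not_le.1 hi).le
  refine ⟨f, ?_⟩
  filter_upwards [Metric.tendsto_nhds.1 hx (ε / 2) (half_pos hε)] with n hn
  rw [dist_zero_right, Real.norm_eq_abs] at hn
  calc |x n - indicatorComb (colorClass q) f n|
      = |(x n - spread q l n) + spread q (l - f) n| := by
        rw [indicatorComb_colorClass, map_sub, Pi.sub_apply]
        ring_nf
    _ ≤ |x n - spread q l n| + |spread q (l - f) n| := abs_add_le _ _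
    _ < ε := by linarith [abs_spread_le (q := q) (half_pos hε).le hlf n]

lemma exists_forall_abs_limit_sub_le (hq : ∀ i, (colorClass q i).Infinite)
    (hx : x ∈ JLinf ι (colorClass q))
    (hl : ∀ i, Tendsto x (cofinite ⊓ 𝓟 (colorClass q i)) (𝓝 (l i))) {ε : ℝ} (hε : 0 < ε) :
    ∃ f : ι →₀ ℝ, (∀ i, |(l - f) i| ≤ ε) ∧ ∀ᶠ n in cofinite, |x n - spread q f n| < ε := by
  obtain ⟨f, hf⟩ := mem_JLinf_iff.1 hx ε hε
  refine ⟨f, fun i => ?_, by rwa [indicatorComb_colorClass] at hf⟩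
  have := (hq i).cofinite_inf_principal_neBot
  refine le_of_tendsto ((hl i).sub_const (f i)).abs ?_
  filter_upwards [eventually_indicatorComb_eq (almostDisjoint_colorClass q) f i,
    hf.filter_mono inf_le_left] with n hn hxn
  rw [hn] at hxn
  exact hxn.le

lemma tendsto_limit_cofinite (hq : ∀ i, (colorClass q i).Infinite)
    (hx : x ∈ JLinf ι (colorClass q))
    (hl : ∀ i, Tendsto x (cofinite ⊓ 𝓟 (colorClass q i)) (𝓝 (l i))) :
    Tendsto l cofinite (𝓝 0) := by
  refine Metric.tendsto_nhds.2 fun ε hε => ?_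
  obtain ⟨f, hlf, -⟩ := exists_forall_abs_limit_sub_le hq hx hl (half_pos hε)
  filter_upwards [f.support.finite_toSet.compl_mem_cofinite] with i hi
  have hfi : f i = 0 := Finsupp.notMem_support_iff.1 hi
  have hli := hlf i
  rw [Pi.sub_apply, hfi, sub_zero] at hli
  rw [dist_zero_right]
  exact hli.trans_lt (half_lt_self hε)

lemma tendsto_sub_spread_limit (hq : ∀ i, (colorClass q i).Infinite)
    (hx : x ∈ JLinf ι (colorClass q))
    (hl : ∀ i, Tendsto x (cofinite ⊓ 𝓟 (colorClass q i)) (𝓝 (l i))) :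
    Tendsto (fun n => x n - spread q l n) cofinite (𝓝 0) := by
  refine Metric.tendsto_nhds.2 fun ε hε => ?_
  obtain ⟨f, hlf, hxf⟩ := exists_forall_abs_limit_sub_le hq hx hl (half_pos hε)
  filter_upwards [hxf] with n hn
  rw [dist_zero_right]
  calc |x n - spread q l n| = |(x n - spread q f n) - spread q (l - f) n| := by
        rw [map_sub, Pi.sub_apply]
        ring_nf
    _ ≤ |x n - spread q f n| + |spread q (l - f) n| := abs_sub _ _
    _ < ε := by linarith [abs_spread_le (q := q) (half_pos hε).le hlf n]

end Decomposition

section OneAdditive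

variable {Ω : Type*} {F : Set (Set Ω)}

lemma OneAdd.apply {ν : Set Ω → ℓ^∞(ℕ, ℝ)} (hν : OneAdd F ν) (n : ℕ) :
    OneAdd F fun A => ν A n :=
  fun A hA B hB hAB => (abs_apply_le_norm _ n).trans (hν A hA B hB hAB)

lemma OneAdd.of_tendsto {ι : Type*} {L : Filter ι} [L.NeBot] {ν : ι → Set Ω → ℝ} {p : Set Ω → ℝ}
    (hF : IsSetAlg F) (hν : ∀ k, OneAdd F (ν k))
    (hp : ∀ A ∈ F, Tendsto (fun k => ν k A) L (𝓝 (p A))) : OneAdd F p :=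
  fun A hA B hB hAB => le_of_tendsto
    (((hp _ (hF.2.2 A hA B hB)).sub (hp A hA)).sub (hp B hB)).norm
    (.of_forall fun k => hν k A hA B hB hAB)

lemma exists_coeFn_eq_norm_sub_le {x : ℓ^∞(ℕ, ℝ)} {y : ℕ → ℝ} {C : ℝ}
    (hxy : ∀ n, |x n - y n| ≤ C) : ∃ z : ℓ^∞(ℕ, ℝ), ⇑z = y ∧ ‖x - z‖ ≤ C := by
  have hy : Memℓp y ∞ := memℓp_infty ⟨‖x‖ + C, by
    rintro _ ⟨n, rfl⟩
    calc |y n| = |x n - (x n - y n)| := by ring_nf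
      _ ≤ |x n| + |x n - y n| := abs_sub _ _
      _ ≤ ‖x‖ + C := add_le_add (abs_apply_le_norm x n) (hxy n)⟩
  exact ⟨⟨y, hy⟩, rfl, lp.norm_le_of_forall_le' _ hxy⟩

lemma exists_vectMeas_coeFn_eq (hF : IsSetAlg F) {ν : Set Ω → ℓ^∞(ℕ, ℝ)} {m : Set Ω → ℕ → ℝ}
    (hm : VectMeas F m) {C : ℝ} (hνm : ∀ A ∈ F, ∀ n, |ν A n - m A n| ≤ C) :
    ∃ μ : Set Ω → ℓ^∞(ℕ, ℝ), VectMeas F μ ∧ ∀ A ∈ F, ⇑(μ A) = m A ∧ ‖ν A - μ A‖ ≤ C := by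
  choose! μ hμ using fun A hA => exists_coeFn_eq_norm_sub_le (hνm A hA)
  refine ⟨μ, fun A hA B hB hAB => lp.ext ?_, hμ⟩
  rw [lp.coeFn_add, (hμ _ (hF.2.2 A hA B hB)).1, (hμ A hA).1, (hμ B hB).1, hm A hA B hB hAB]

lemma oneAdd_half_sub_spread {ι : Type*} {q : ℕ → Option ι} {ν : Set Ω → ℕ → ℝ} {l : Set Ω → ι → ℝ}
    (hν : ∀ n, OneAdd F fun A => ν A n) (hl : ∀ i, OneAdd F fun A => l A i) (n : ℕ) :
    OneAdd F fun A => (ν A n - spread q (l A) n) / 2 := by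
  intro A hA B hB hAB
  have hνn : |ν (A ∪ B) n - ν A n - ν B n| ≤ 1 := hν n A hA B hB hAB
  have hln := abs_spread_le (q := q) zero_le_one (fun i => hl i A hA B hB hAB) n
  have hspread : spread q (fun i => l (A ∪ B) i - l A i - l B i) n =
      spread q (l (A ∪ B)) n - spread q (l A) n - spread q (l B) n := by
    change spread q (l (A ∪ B) - l A - l B) n = _
    rw [map_sub, map_sub]
    rfl
  rw [hspread] at hln
  rw [Real.norm_eq_abs]
  rw [abs_le] at *
  constructor <;> linarith

end OneAdditive

section CountableAlgebra

variable {Ω : Type} {F : Set (Set Ω)} {K : ℝ}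

-- The limits contribute `2 * K` to the error, and the remainders, whose additivity defect is
-- twice that of `ν`, contribute `2 * (2 * K)`.
lemma exists_vectMeas_mem_JLinf_colorClass {ι : Type} {q : ℕ → Option ι} (hK : IsKRConst K)
    (hF : IsSetAlg F) (hFc : F.Countable) (hq : ∀ i, (colorClass q i).Infinite)
    {ν : Set Ω → ℓ^∞(ℕ, ℝ)} (hν : OneAdd F ν) (hνq : ∀ A ∈ F, ν A ∈ JLinf ι (colorClass q)) :
    ∃ μ : Set Ω → ℓ^∞(ℕ, ℝ), VectMeas F μ ∧
      ∀ A ∈ F, μ A ∈ JLinf ι (colorClass q) ∧ ‖ν A - μ A‖ ≤ 6 * K := by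
  choose! l hl using fun A hA =>
    exists_tendsto_of_mem_JLinf (almostDisjoint_colorClass q) (hνq A hA)
  have hl_add (i) : OneAdd F fun A => l A i :=
    have := (hq i).cofinite_inf_principal_neBot
    .of_tendsto hF hν.apply fun A hA => hl A hA i
  obtain ⟨limMeas, hlim_add, hlim_zero, hlim_le⟩ := exists_vectMeas_tendsto_zero hK hF hFc hl_add
    fun A hA => tendsto_limit_cofinite hq (hνq A hA) (hl A hA)
  obtain ⟨remMeas, hrem_add, hrem_zero, hrem_le⟩ := exists_vectMeas_tendsto_zero hK hF hFc
    (oneAdd_half_sub_spread (q := q) hν.apply hl_add)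
    fun A hA => by simpa using (tendsto_sub_spread_limit hq (hνq A hA) (hl A hA)).div_const 2
  let m (A : Set Ω) (n : ℕ) : ℝ := 2 * remMeas n A + spread q (fun i => limMeas i A) n
  have hm : VectMeas F m := fun A hA B hB hAB => by
    have hlimAB : (fun i => limMeas i (A ∪ B)) = (fun i => limMeas i A) + fun i => limMeas i B :=
      funext fun i => hlim_add i A hA B hB hAB
    ext n
    simp only [m, hrem_add n A hA B hB hAB, hlimAB, map_add, Pi.add_apply]
    ring
  have hνm (A) (hA : A ∈ F) (n) : |ν A n - m A n| ≤ 6 * K := by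
    have hlim := abs_spread_le (q := q) (l := l A - fun i => limMeas i A)
      (by linarith [hK.nonneg]) (fun i => hlim_le i A hA) n
    have hrem := hrem_le n A hA
    rw [map_sub, Pi.sub_apply] at hlim
    simp only [m]
    rw [abs_le] at *
    constructor <;> linarith
  obtain ⟨μ, hμ, hμm⟩ := exists_vectMeas_coeFn_eq hF hm hνm
  refine ⟨μ, hμ, fun A hA => ⟨mem_JLinf_colorClass_of_tendsto (hlim_zero A hA) ?_, (hμm A hA).2⟩⟩
  simpa [(hμm A hA).1, m] using (hrem_zero A hA).const_mul 2

theorem exists_vectMeas_norm_sub_le {Γ : Type} {N : Γ → Set ℕ} (hK : IsKRConst K)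
    (hNinf : ∀ γ, (N γ).Infinite) (hN : AlmostDisjoint N) (hF : IsSetAlg F) (hFc : F.Countable)
    {ν : Set Ω → JLinf Γ N} (hν : OneAdd F ν) :
    ∃ μ : Set Ω → JLinf Γ N, VectMeas F μ ∧ ∀ A ∈ F, ‖ν A - μ A‖ ≤ 6 * K := by
  obtain ⟨S, hS, hνS⟩ := exists_countable_forall_mem_JLinf
    (hFc.image fun A => (ν A : ℓ^∞(ℕ, ℝ))) (by rintro _ ⟨A, -, rfl⟩; exact (ν A).2)
  have : Countable S := hS
  obtain ⟨q, hqN⟩ := exists_colorClass_eventuallyEq (N := fun γ : S => N γ)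
    fun γ δ hγδ => hN (Subtype.val_injective.ne hγδ)
  have hqinf (γ : S) : (colorClass q γ).Infinite :=
    frequently_cofinite_iff_infinite.1
      ((frequently_cofinite_iff_infinite.2 (hNinf γ)).mp ((hqN γ).mem_iff.mono fun _ h => h.2))
  have hJL : JLinf S (colorClass q) = JLinf S (fun γ => N γ) := JLinf_congr hqN
  obtain ⟨μ, hμ, hμν⟩ := exists_vectMeas_mem_JLinf_colorClass hK hF hFc hqinf
    (ν := fun A => ν A) hν fun A hA => hJL ▸ hνS _ ⟨A, hA, rfl⟩
  have hμN (A) (hA : A ∈ F) : μ A ∈ JLinf Γ N := JLinf_comp_le N _ (hJL ▸ (hμν A hA).1)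
  classical
  refine ⟨fun A => if hA : A ∈ F then ⟨μ A, hμN A hA⟩ else 0, fun A hA B hB hAB => ?_,
    fun A hA => ?_⟩
  · simp [hA, hB, hF.2.2 A hA B hB, hμ A hA B hB hAB]
  · simpa [hA] using (hμν A hA).2

end CountableAlgebra

/-! ### Algebras of cardinality `ℵ₁` -/

section FinCofin

variable {α : Type*}

/-- The algebra of finite and cofinite subsets of `α`. -/
def finCofin (α : Type*) : Set (Set α) :=
  {A | A.Finite ∨ Aᶜ.Finite}

lemma coe_mem_finCofin (s : Finset α) : ↑s ∈ finCofin α :=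
  .inl s.finite_toSet

lemma isSetAlg_finCofin (α : Type*) : IsSetAlg (finCofin α) := by
  refine ⟨.inl Set.finite_empty, fun A hA => ?_, fun A hA B hB => ?_⟩
  · simpa only [finCofin, Set.mem_ofPred, compl_compl] using hA.symm
  · rcases hA with hA | hA
    · rcases hB with hB | hB
      · exact .inl (hA.union hB)
      · exact .inr (hB.subset (Set.compl_subset_compl.2 Set.subset_union_right))
    · exact .inr (hA.subset (Set.compl_subset_compl.2 Set.subset_union_left))

lemma mk_finCofin_le [Infinite α] : #(finCofin α) ≤ #α := by
  have hsub : finCofin α ⊆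
      Set.range (fun s : Finset α => (s : Set α)) ∪ Set.range fun s : Finset α => (s : Set α)ᶜ := by
    rintro A (hA | hA)
    · exact .inl ⟨hA.toFinset, hA.coe_toFinset⟩
    · exact .inr ⟨hA.toFinset, by simp⟩
  calc #(finCofin α) ≤ #(Finset α) + #(Finset α) :=
        (mk_le_mk_of_subset hsub).trans ((mk_union_le _ _).trans
          (add_le_add mk_range_le mk_range_le))
    _ = #α := by rw [mk_finset_of_infinite, add_mk_eq_self]

lemma exists_extension_coe_compl_coe [Infinite α] {X : Type*} [AddCommGroup X] (G : Finset α → X) :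
    ∃ ν : Set α → X, (∀ s : Finset α, ν s = G s) ∧ ∀ s : Finset α, ν (↑s)ᶜ = -G s := by
  refine ⟨Function.extend (↑) G (Function.extend (fun s : Finset α => (↑s)ᶜ) (-G) 0),
    Finset.coe_injective.extend_apply _ _, fun s => ?_⟩
  have hcofinite : ¬ ∃ t : Finset α, (t : Set α) = (↑s)ᶜ := fun ⟨t, ht⟩ =>
    s.finite_toSet.infinite_compl (ht ▸ t.finite_toSet)
  rw [Function.extend_apply' _ _ _ hcofinite]
  exact (compl_injective.comp Finset.coe_injective).extend_apply _ _ s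

lemma exists_oneAdd_finCofin [Infinite α] [DecidableEq α] {X : Type*} [SeminormedAddCommGroup X]
    {G : Finset α → X} (hG : ∀ s t, Disjoint s t → ‖G (s ∪ t) - G s - G t‖ ≤ 1) :
    ∃ ν : Set α → X, OneAdd (finCofin α) ν ∧ ∀ s : Finset α, ν s = G s := by
  obtain ⟨ν, hν_fin, hν_cofin⟩ := exists_extension_coe_compl_coe G
  have hmixed (s : Finset α) {B : Set α} (hB : Bᶜ.Finite) (hsB : Disjoint ↑s B) :
      ‖ν (↑s ∪ B) - ν s - ν B‖ ≤ 1 := by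
    obtain ⟨t, ht⟩ := hB.exists_finset_coe
    obtain rfl : (↑t)ᶜ = B := by rw [ht, compl_compl]
    have hst : s ⊆ t := Finset.coe_subset.1 (Set.disjoint_compl_right_iff_subset.1 hsB)
    have hunion : (↑s ∪ (↑t)ᶜ : Set α) = (↑(t \ s))ᶜ := by
      rw [Finset.coe_sdiff, Set.compl_sdiff]
    have hdefect := hG (t \ s) s Finset.sdiff_disjoint
    rw [Finset.sdiff_union_of_subset hst] at hdefect
    rw [hunion, hν_cofin, hν_fin, hν_cofin]
    convert hdefect using 2
    abel
  refine ⟨ν, fun A hA B hB hAB => ?_, hν_fin⟩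
  rcases hA with hA | hA
  · lift A to Finset α using hA
    rcases hB with hB | hB
    · lift B to Finset α using hB
      rw [← Finset.coe_union, hν_fin, hν_fin, hν_fin]
      exact hG _ _ (Finset.disjoint_coe.1 hAB)
    · exact hmixed A hB hAB
  · have hB : B.Finite := hA.subset hAB.subset_compl_left
    lift B to Finset α using hB
    rw [Set.union_comm, sub_right_comm]
    exact hmixed B hA hAB.symm

lemma VectMeas.apply_finset {X : Type*} [AddCommGroup X] {μ : Set α → X}
    (hμ : VectMeas (finCofin α) μ) (s : Finset α) : μ s = ∑ a ∈ s, μ {a} := by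
  classical
  induction s using Finset.induction_on with
  | empty => simpa using hμ ∅ (isSetAlg_finCofin α).1 ∅ (isSetAlg_finCofin α).1 disjoint_bot_left
  | insert a s ha ih =>
    rw [Finset.sum_insert ha, ← ih, Finset.coe_insert, Set.insert_eq]
    exact hμ _ (.inl (Set.finite_singleton a)) _ (coe_mem_finCofin s) (by simpa using ha)

end FinCofin

lemma exists_infinite_subset_infinite_sdiff {β : Type*} {S : Set β} (hS : S.Infinite) :
    ∃ M ⊆ S, M.Infinite ∧ (S \ M).Infinite := by
  obtain ⟨M, M', hMM', hdisj, hcard⟩ := hS.exists_union_disjoint_cardinal_eq_of_infinite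
  have hfinite : M.Finite ↔ M'.Finite := by
    rw [← lt_aleph0_iff_set_finite, ← lt_aleph0_iff_set_finite, hcard]
  have hM : M.Infinite := fun h => hS (hMM' ▸ h.union (hfinite.1 h))
  refine ⟨M, hMM' ▸ Set.subset_union_left, hM, ?_⟩
  rw [← hMM', Set.union_sdiff_cancel_left hdisj.inter_eq.subset]
  exact fun h => hM (hfinite.2 h)

section Excess

variable {α : Type*} {M : α → Set ℕ}

lemma summable_posPart_of_sum_le {f : α → ℝ} {C : ℝ} (hf : ∀ s : Finset α, ∑ a ∈ s, f a ≤ C) :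
    Summable fun a => (f a)⁺ := by
  refine summable_of_sum_le (c := C) (fun a => posPart_nonneg _) fun s => ?_
  calc ∑ a ∈ s, (f a)⁺ = ∑ a ∈ s with 0 < f a, f a := by
        rw [Finset.sum_filter]
        exact Finset.sum_congr rfl fun a _ => posPart_eq_ite_lt
    _ ≤ C := hf _

lemma countable_support_of_abs_sum_le {f : α → ℝ} {C : ℝ}
    (hf : ∀ s : Finset α, |∑ a ∈ s, f a| ≤ C) : f.support.Countable := by
  have hpos : Summable fun a => (f a)⁺ :=
    summable_posPart_of_sum_le fun s => (le_abs_self _).trans (hf s)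
  have hneg : Summable fun a => (f a)⁻ := by
    simpa using summable_posPart_of_sum_le (f := -f) (C := C) fun s => by
      simpa using (neg_le_abs _).trans (hf s)
  refine Summable.countable_support ((hpos.sub hneg).congr fun a => ?_)
  exact posPart_sub_negPart (f a)

open scoped Classical in
/-- The number of those `M a`, `a ∈ s`, containing `n`, in excess of one. This is the value at `n`
of `∑ a ∈ s, 1_{M a} - 1_{⋃ a ∈ s, M a}`; the subtraction is truncated, giving `0` at the points
of no `M a`. -/
noncomputable def excess (M : α → Set ℕ) (s : Finset α) (n : ℕ) : ℕ :=
  Finset.card {a ∈ s | n ∈ M a} - 1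

lemma abs_excess_union_sub_le [DecidableEq α] {s t : Finset α} (hst : Disjoint s t) (n : ℕ) :
    |(excess M (s ∪ t) n - excess M s n - excess M t n : ℝ)| ≤ 1 := by
  classical
  have hcard : Finset.card {a ∈ s ∪ t | n ∈ M a} =
      Finset.card {a ∈ s | n ∈ M a} + Finset.card {a ∈ t | n ∈ M a} := by
    rw [Finset.filter_union, Finset.card_union_of_disjoint (Finset.disjoint_filter_filter hst)]
  have hdefect : |(excess M (s ∪ t) n - excess M s n - excess M t n : ℤ)| ≤ 1 := by
    rw [excess, excess, excess, hcard, abs_le]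
    omega
  exact_mod_cast hdefect

lemma abs_sum_indicator_sub_excess_le (s : Finset α) (n : ℕ) :
    |∑ a ∈ s, (M a).indicator 1 n - (excess M s n : ℝ)| ≤ 1 := by
  classical
  have hsum : ∑ a ∈ s, (M a).indicator (1 : ℕ → ℝ) n = Finset.card {a ∈ s | n ∈ M a} := by
    simp [Set.indicator_apply]
  rw [hsum, excess]
  rcases Finset.card {a ∈ s | n ∈ M a} with _ | k <;> simp

lemma eventually_excess_eq_zero (hM : AlmostDisjoint M) (s : Finset α) :
    ∀ᶠ n in cofinite, excess M s n = 0 := by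
  classical
  have hdisj : ∀ᶠ n in cofinite, ∀ a ∈ s, ∀ b ∈ s, a ≠ b → n ∉ M a ∩ M b :=
    (eventually_all_finset _).2 fun a _ => (eventually_all_finset _).2 fun b _ =>
      eventually_imp_distrib_left.2 fun hab => (hM hab).eventually_cofinite_notMem
  filter_upwards [hdisj] with n hn
  refine Nat.sub_eq_zero_of_le (Finset.card_le_one.2 fun a ha b hb => ?_)
  rw [Finset.mem_filter] at ha hb
  exact not_not.1 fun hab => hn a ha.1 b hb.1 hab ⟨ha.2, hb.2⟩

lemma exists_mem_nullSeq_apply_eq_excess (hM : AlmostDisjoint M) (s : Finset α) :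
    ∃ x ∈ nullSeq, ∀ n, x n = excess M s n := by
  have hzero : ∀ᶠ n in cofinite, (excess M s n : ℝ) = 0 := by
    simpa using eventually_excess_eq_zero hM s
  have hmem : Memℓp (fun n => (excess M s n : ℝ)) ∞ := (memℓp_zero hzero).of_exponent_ge zero_le
  exact ⟨⟨_, hmem⟩, tendsto_const_nhds.congr' (hzero.mono fun n hn => hn.symm), fun n => rfl⟩

lemma exists_eq_indicator_of_abs_excess_sub_sum_le [Uncountable α] {m : α → ℕ → ℝ} {v : ℝ}
    (hm : ∀ s n, |excess M s n - ∑ a ∈ s, m a n| ≤ v) : ∃ a, m a = (M a).indicator 1 := by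
  let D (n : ℕ) : Set α := Function.support fun a => (M a).indicator 1 n - m a n
  have hD (n : ℕ) : (D n).Countable := by
    refine countable_support_of_abs_sum_le (C := 1 + v) fun s => ?_
    rw [Finset.sum_sub_distrib]
    exact (abs_sub_le _ (excess M s n : ℝ) _).trans
      (add_le_add (abs_sum_indicator_sub_excess_le s n) (hm s n))
  obtain ⟨a, ha⟩ := (Set.ne_univ_iff_exists_notMem (⋃ n, D n)).1 fun h =>
    Set.not_countable_univ (h ▸ Set.countable_iUnion hD)
  refine ⟨a, funext fun n => ?_⟩
  have han : (M a).indicator 1 n - m a n = 0 :=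
    not_not.1 fun h => ha (Set.mem_iUnion_of_mem n h)
  linarith

end Excess

theorem not_hasKappaSVMBound_JLinf {Γ : Type} {N : Γ → Set ℕ} (hNinf : ∀ γ, (N γ).Infinite)
    (hN : AlmostDisjoint N) (hΓ : ℵ₁ ≤ #Γ) {κ : Cardinal} (hκ : ℵ₁ < κ) (v : ℝ) :
    ¬ HasKappaSVMBound (JLinf Γ N) κ v := by
  classical
  intro hbound
  obtain ⟨S, hS⟩ := le_mk_iff_exists_set.1 hΓ
  have : Uncountable S := by
    rw [← aleph0_lt_mk_iff, hS]
    exact aleph0_lt_aleph_one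
  choose M hMN hM hNM using fun γ : S => exists_infinite_subset_infinite_sdiff (hNinf γ)
  have hMad : AlmostDisjoint M := fun a b hab =>
    (hN (Subtype.val_injective.ne hab)).subset (Set.inter_subset_inter (hMN a) (hMN b))
  choose x hx_null hx using exists_mem_nullSeq_apply_eq_excess hMad
  let G (s : Finset S) : JLinf Γ N := ⟨x s, nullSeq_le_JLinf N (hx_null s)⟩
  obtain ⟨ν, hν, hνG⟩ := exists_oneAdd_finCofin (G := G) fun s t hst =>
    lp.norm_le_of_forall_le' _ fun n => by
      change |x (s ∪ t) n - x s n - x t n| ≤ 1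
      simpa only [hx] using abs_excess_union_sub_le hst n
  obtain ⟨μ, hμ, hνμ⟩ := hbound S (finCofin S) (isSetAlg_finCofin S)
    ((mk_finCofin_le.trans_eq hS).trans_lt hκ) ν hν
  obtain ⟨a, ha⟩ := exists_eq_indicator_of_abs_excess_sub_sum_le (M := M) (v := v)
    (m := fun a => ⇑(μ {a} : ℓ^∞(ℕ, ℝ))) fun s n => by
      have hs := (abs_apply_le_norm (ν s - μ s : ℓ^∞(ℕ, ℝ)) n).trans (hνμ s (coe_mem_finCofin s))
      rwa [lp.coeFn_sub, Pi.sub_apply, hνG, hμ.apply_finset, Submodule.coe_sum, lp.coeFn_sum,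
        Finset.sum_apply, hx] at hs
  refine indicatorLp_notMem_JLinf hN (hMN a) (hM a) (hNM a) ?_
  rw [← lp.ext (ha.trans (coeFn_indicatorLp _).symm)]
  exact (μ {a}).2

theorem stmt_16_general (K : ℝ) (hK : IsKRConst K) (Γ : Type) (hΓ : ℵ₁ ≤ #Γ)
    (N : Γ → Set ℕ) (hNinf : ∀ γ, (N γ).Infinite) (hN : AlmostDisjoint N) :
    (∀ (Ω : Type) (F : Set (Set Ω)), IsSetAlg F → F.Countable →
      ∀ ν : Set Ω → JLinf Γ N, OneAdd F ν →
        ∃ μ : Set Ω → JLinf Γ N, VectMeas F μ ∧ ∀ A ∈ F, ‖ν A - μ A‖ ≤ 6 * K) ∧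
    (¬ ∃ v : ℝ, HasKappaSVMBound (JLinf Γ N) (aleph 2) v) ∧
    ∀ κ : Cardinal, κ < aleph 2 → ∃ v : ℝ, HasKappaSVMBound (JLinf Γ N) κ v := by
  have h_aleph_two : aleph 2 = Order.succ ℵ₁ := by rw [succ_aleph, one_add_one_eq_two]
  refine ⟨fun Ω F hF hFc ν hν => exists_vectMeas_norm_sub_le hK hNinf hN hF hFc hν, ?_,
    fun κ hκ => ⟨6 * K, fun Ω F hF hFκ ν hν => ?_⟩⟩
  · rintro ⟨v, hv⟩
    exact not_hasKappaSVMBound_JLinf hNinf hN hΓ (h_aleph_two ▸ Order.lt_succ ℵ₁) v hv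
  · have hκ_le : κ ≤ ℵ₁ := Order.lt_succ_iff.1 (h_aleph_two ▸ hκ)
    have hFc : F.Countable :=
      le_aleph0_iff_set_countable.1 (lt_aleph_one_iff.1 (hFκ.trans_le hκ_le))
    exact exists_vectMeas_norm_sub_le hK hNinf hN hF hFc hν

/-- for an almost disjoint family of size continuum, the
Johnson–Lindenstrauss space JL∞ has the ω₁-SVM property with any constant
v > 120K, fails the ω₂-SVM property, and its SVM character equals ω₂. -/
theorem stmt_16 (K : ℝ) (hK : IsKRConst K)
    (Γ : Type) (hΓ : #Γ = Cardinal.continuum)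
    (N : Γ → Set ℕ) (hNinf : ∀ γ : Γ, (N γ).Infinite)
    (hNad : ∀ γ δ : Γ, γ ≠ δ → (N γ ∩ N δ).Finite) :
    (∀ v : ℝ, 120 * K < v →
      ∀ (Ω : Type) (F : Set (Set Ω)), IsSetAlg F → F.Countable →
        ∀ ν : Set Ω → ↥(JLinf Γ N), OneAdd F ν →
          ∃ μ : Set Ω → ↥(JLinf Γ N), VectMeas F μ ∧ ∀ A ∈ F, ‖ν A - μ A‖ ≤ v) ∧
    (¬ ∃ v : ℝ, HasKappaSVMBound (↥(JLinf Γ N)) (Cardinal.aleph 2) v) ∧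
    (∀ κ : Cardinal, κ < Cardinal.aleph 2 →
      ∃ v : ℝ, HasKappaSVMBound (↥(JLinf Γ N)) κ v) := by
  obtain ⟨hcountable, hlarge⟩ := stmt_16_general K hK Γ (hΓ ▸ aleph_one_le_continuum) N hNinf hNad
  exact ⟨fun v hv Ω F hF hFc ν hν => (hcountable Ω F hF hFc ν hν).imp fun μ hμ =>
    ⟨hμ.1, fun A hA => (hμ.2 A hA).trans (by linarith [hK.nonneg])⟩, hlarge⟩
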